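/- Let H be an infinite subset of { 2^k : k ∈ ℕ }, and let L₂ = { a^l b^l a^m b^m a^n b^n : l, m, n ≥ 1, and (l ∈ H or m ∈ H or n ∈ H) } ∪ { a^i b^i a^j b^j : i, j ≥ 1 } over the alphabet {a, b}. Then L₂ is not 3-linear. -/

import Mathlib

/-- The `i`-fold repetition `v^i` of a word `v`. -/
def wordPow {T : Type} (v : List T) : ℕ → List T
  | 0 => []
  | n + 1 => v ++ wordPow v n

/-- A production of a linear grammar: either `A → u` (with `u` a terminal word)
or `A → u B w` (with `u, w` terminal words and `B` a nonterminal). -/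
structure LinearRule (T N : Type) where
  input : N
  output : List T ⊕ (List T × N × List T)

/-- `LinDerives rs A p` : from nonterminal `A`, the linear productions in `rs`
derive the terminal word `p`. -/
inductive LinDerives {T N : Type} (rs : List (LinearRule T N)) : N → List T → Prop
  | terminal {A : N} {u : List T} (hr : (⟨A, Sum.inl u⟩ : LinearRule T N) ∈ rs) :
      LinDerives rs A u
  | step {A B : N} {u w p : List T}
      (hr : (⟨A, Sum.inr (u, B, w)⟩ : LinearRule T N) ∈ rs)
      (hp : LinDerives rs B p) :
      LinDerives rs A (u ++ p ++ w)

/-- A linear grammar: a type of nonterminals, a start symbol, and a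
finite list of linear productions. -/
structure LinearGrammar (T : Type) where
  NT : Type
  start : NT
  rules : List (LinearRule T NT)

/-- The language generated by a linear grammar. -/
def LinearGrammar.language {T : Type} (G : LinearGrammar T) : Set (List T) :=
  {p | LinDerives G.rules G.start p}

/-- A linear grammar is `(g/h)`-rated linear (`k = g/h`) if every production
`A → u B w` satisfies `h * |w| = g * |u|`. -/
def LinearGrammar.IsRated {T : Type} (g h : ℕ) (G : LinearGrammar T) : Prop :=
  ∀ r ∈ G.rules, ∀ u w, ∀ B : G.NT, r.output = Sum.inr (u, B, w) →
    h * w.length = g * u.length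

/-- A grammar generates exactly the language `L`, up to the empty word. -/
def LinearGrammar.GeneratesModEmpty {T : Type} (G : LinearGrammar T) (L : Set (List T)) :
    Prop :=
  ∀ p : List T, p ≠ [] → (p ∈ L ↔ p ∈ G.language)

/-- A language is linear if some linear grammar generates it, up to the empty word. -/
def IsLinearLang {T : Type} (L : Set (List T)) : Prop :=
  ∃ G : LinearGrammar T, G.GeneratesModEmpty L

/-- A language is `(g/h)`-rated linear if some `(g/h)`-rated linear grammar
generates it, up to the empty word. -/
def IsRatedLinearLang {T : Type} (g h : ℕ) (L : Set (List T)) : Prop :=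
  ∃ G : LinearGrammar T, G.IsRated g h ∧ G.GeneratesModEmpty L

/-- A `k`-linear grammar: a linear grammar together with the extra production
`S → S₁S₂⋯S_k` from a start symbol `S`, where none of the `Sᵢ` (the `heads`)
occurs on the right-hand side of any other production and `S` occurs in no other
production at all (the latter is automatic here, since the start symbol is kept
as a fresh symbol outside the type `NT` of the remaining nonterminals). -/
structure KLinearGrammar (T : Type) (k : ℕ) where
  NT : Type
  heads : Fin k → NT
  rules : List (LinearRule T NT)
  heads_not_on_rhs : ∀ r ∈ rules, ∀ u w, ∀ B : NT, r.output = Sum.inr (u, B, w) →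
    ∀ i : Fin k, B ≠ heads i

/-- The language generated by a `k`-linear grammar: as the start symbol occurs
only in the production `S → S₁S₂⋯S_k`, it consists of the concatenations
`p₁p₂⋯p_k` where each `pᵢ` is derived from `Sᵢ` by the linear productions. -/
def KLinearGrammar.language {T : Type} {k : ℕ} (G : KLinearGrammar T k) : Set (List T) :=
  {p | ∃ ps : Fin k → List T, p = (List.ofFn ps).flatten ∧
    ∀ i : Fin k, LinDerives G.rules (G.heads i) (ps i)}

/-- A language is `k`-linear if some `k`-linear grammar generates it, up to the
empty word. -/
def IsKLinearLang {T : Type} (k : ℕ) (L : Set (List T)) : Prop :=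
  ∃ G : KLinearGrammar T k, ∀ p : List T, p ≠ [] → (p ∈ L ↔ p ∈ G.language)

/-- A language is metalinear if it is `k`-linear for some positive integer `k`. -/
def IsMetalinearLang {T : Type} (L : Set (List T)) : Prop :=
  ∃ k : ℕ, 0 < k ∧ IsKLinearLang k L

/-- The language
`L₂ = {aˡ bˡ aᵐ bᵐ aⁿ bⁿ : l, m, n ≥ 1, l ∈ H or m ∈ H or n ∈ H} ∪ {aⁱ bⁱ aʲ bʲ : i, j ≥ 1}`
(Example 14), with alphabet `{a, b}` taken to be `Fin 2` (`a = 0`, `b = 1`). -/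
def L2 (H : Set ℕ) : Set (List (Fin 2)) :=
  {p | (∃ l m n : ℕ, 1 ≤ l ∧ 1 ≤ m ∧ 1 ≤ n ∧ (l ∈ H ∨ m ∈ H ∨ n ∈ H) ∧
          p = List.replicate l 0 ++ List.replicate l 1 ++
              List.replicate m 0 ++ List.replicate m 1 ++
              List.replicate n 0 ++ List.replicate n 1) ∨
       (∃ i j : ℕ, 1 ≤ i ∧ 1 ≤ j ∧
          p = List.replicate i 0 ++ List.replicate i 1 ++
              List.replicate j 0 ++ List.replicate j 1)}

/-!
A linear derivation that is long compared with the number of nonterminals repeats a nonterminal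
near its root, so long words can be pumped near their ends; in a `k`-linear grammar, the first long
one of the `k` factors can be pumped close to the beginning of the whole word. Apply this to
`w = aˡ bˡ aᵐ bᵐ aᵐ bᵐ` with `m ∉ H` and `l ∈ H` large: a piece `v` of the first block is pumped
together with a piece `y`. As words of `L₂` contain equally many `a`s and `b`s and have at most six
blocks, `v = aʲ` and `y = bʲ` with `j ≥ 1`, and as the first two blocks keep equal lengths, `y` lies
in the second block. Hence `l + i j ∈ H` for every `i`, whereas `H` contains no infinite arithmetic
progression.
-/

/-! ### Runs and powers of words -/

section Words

variable {α : Type*}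

theorem head?_replicate_append_ne {a b : α} (hab : a ≠ b) {n : ℕ} (hn : 0 < n)
    (t : List α) : (List.replicate n a ++ t).head? ≠ some b := by
  obtain ⟨n, rfl⟩ := Nat.exists_eq_succ_of_ne_zero hn.ne'
  simpa [List.replicate_succ] using hab

theorem replicate_append_inj {a : α} {s t : List α} (hs : s.head? ≠ some a)
    (ht : t.head? ≠ some a) :
    ∀ {m n : ℕ}, List.replicate m a ++ s = List.replicate n a ++ t → m = n ∧ s = t
  | 0, 0, h => ⟨rfl, by simpa using h⟩
  | 0, n + 1, h => absurd (by simpa [List.replicate_succ] using congrArg List.head? h) hs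
  | m + 1, 0, h => absurd (by simpa [List.replicate_succ] using congrArg List.head? h.symm) ht
  | m + 1, n + 1, h => by
    simpa using replicate_append_inj hs ht (List.cons.inj h).2

theorem exists_eq_replicate_append_of_head?_ne {a : α} {n : ℕ} {s t r : List α}
    (hr : r.head? ≠ some a) (h : List.replicate n a ++ t = s ++ r) :
    ∃ t', s = List.replicate n a ++ t' ∧ t = t' ++ r := by
  obtain hst | ⟨_ | ⟨b, q⟩, hs, rfl⟩ := List.append_eq_append_iff.1 h
  · exact hst
  · exact ⟨[], by simpa using hs.symm, rfl⟩
  · have hb : b = a := List.eq_of_mem_replicate (n := n) (by simp [hs])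
    simp [hb] at hr

theorem exists_eq_replicate_of_length_add_length_le {a : α} {l : ℕ} {s u v r : List α}
    (h : List.replicate l a ++ s = u ++ (v ++ r)) (hlen : u.length + v.length ≤ l) :
    ∃ c j e, c + j + e = l ∧ u = List.replicate c a ∧ v = List.replicate j a ∧
      List.replicate e a ++ s = r := by
  rw [← List.append_assoc] at h
  obtain ⟨t, ht⟩ : u ++ v <+: List.replicate l a :=
    List.prefix_of_prefix_length_le (h ▸ List.prefix_append _ _) (List.prefix_append _ s)
      (by simpa using hlen)
  obtain ⟨hl, huv, ht'⟩ := List.append_eq_replicate_iff.1 ht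
  obtain ⟨-, hu, hv⟩ := List.append_eq_replicate_iff.1 huv
  rw [← ht, List.append_assoc] at h
  exact ⟨u.length, v.length, t.length, by simpa using hl, by simpa using hu, by simpa using hv,
    ht' ▸ List.append_cancel_left h⟩

theorem replicate_append_eq_append_replicate_append {a : α} {l j : ℕ} {t x z : List α}
    (ht : t.head? ≠ some a) (h : List.replicate l a ++ t = x ++ (List.replicate j a ++ z)) :
    (∃ s e, s + j + e = l ∧ x = List.replicate s a ∧ z = List.replicate e a ++ t) ∨
      ∃ b t', b ≠ a ∧ x = List.replicate l a ++ b :: t' := by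
  obtain ⟨_ | ⟨b, t'⟩, hx, rfl⟩ | ⟨q, hl, hz⟩ := List.append_eq_append_iff.1 h
  · cases j with
    | zero => exact .inl ⟨l, 0, by simp, by simpa using hx, by simp⟩
    | succ j => simp [List.replicate_succ] at ht
  · exact .inr ⟨b, t', by simpa using ht, hx⟩
  · obtain ⟨hl, hx, hq⟩ := List.append_eq_replicate_iff.1 hl.symm
    obtain ⟨p, hp, rfl⟩ := exists_eq_replicate_append_of_head?_ne ht hz
    obtain ⟨hlen, -, hp'⟩ := List.append_eq_replicate_iff.1 (hp.symm.trans hq)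
    exact .inl ⟨x.length, p.length, by rw [List.length_replicate] at hlen; omega,
      hx, by rw [← hp']⟩

theorem exists_sublist_of_isChain_ne {a : α} {n : ℕ} {s t : List α} (hs : s.IsChain (· ≠ ·))
    (h : s.Sublist (List.replicate n a ++ t)) :
    ∃ s' : List α, s'.IsChain (· ≠ ·) ∧ s'.Sublist t ∧ s.length ≤ s'.length + 1 := by
  obtain ⟨p, s', rfl, hp, hs'⟩ := List.sublist_append_iff.1 h
  obtain ⟨m, -, rfl⟩ := List.sublist_replicate_iff.1 hp
  have hm : m ≤ 1 := by
    by_contra! hm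
    obtain ⟨m, rfl⟩ := Nat.exists_eq_add_of_le' hm
    simp [List.replicate_succ] at hs
  refine ⟨s', hs.right_of_append, hs', ?_⟩
  rw [List.length_append, List.length_replicate]
  omega

end Words

section WordPow

variable {T : Type}

theorem wordPow_eq_flatten_replicate (v : List T) (n : ℕ) :
    wordPow v n = (List.replicate n v).flatten := by
  induction n with
  | zero => rfl
  | succ n ih => simp [wordPow, ih, List.replicate_succ]

theorem wordPow_succ' (v : List T) (n : ℕ) : wordPow v (n + 1) = wordPow v n ++ v := by
  simp [wordPow_eq_flatten_replicate, List.replicate_succ']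

theorem wordPow_replicate (a : T) (m n : ℕ) :
    wordPow (List.replicate m a) n = List.replicate (n * m) a := by
  simp [wordPow_eq_flatten_replicate]

theorem sublist_wordPow_length {s y : List T} (h : s ⊆ y) : s.Sublist (wordPow y s.length) := by
  induction s with
  | nil => exact List.nil_sublist _
  | cons a s ih =>
    have ha : [a].Sublist y := List.singleton_sublist.2 (h List.mem_cons_self)
    exact ha.append (ih (List.subset_of_cons_subset h))

end WordPow

/-! ### Languages with a pumping length -/

section Pumping

variable {T : Type}

/-- The word `w` can be pumped within the language `L` in two places, the first of which lies within
the first `K` letters of `w`; nothing is assumed on the second one. -/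
def IsPumpable (L : Set (List T)) (K : ℕ) (w : List T) : Prop :=
  ∃ u v x y z : List T, w = u ++ v ++ x ++ y ++ z ∧ u.length + v.length ≤ K ∧ v ++ y ≠ [] ∧
    ∀ i, u ++ wordPow v i ++ x ++ wordPow y i ++ z ∈ L

/-- `K` is a pumping length of `L`, in the sense of `IsPumpable`. -/
def HasPumpingLength (L : Set (List T)) (K : ℕ) : Prop :=
  ∀ w ∈ L, K < w.length → IsPumpable L K w

variable {K K' : ℕ}

theorem IsPumpable.mono {L M : Set (List T)} {w : List T} (h : IsPumpable L K w) (hLM : L ⊆ M)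
    (hK : K ≤ K') : IsPumpable M K' w := by
  obtain ⟨u, v, x, y, z, hw, hlen, hvy, hL⟩ := h
  exact ⟨u, v, x, y, z, hw, hlen.trans hK, hvy, fun i => hLM (hL i)⟩

theorem HasPumpingLength.insert_nil {L : Set (List T)} (h : HasPumpingLength L K) :
    HasPumpingLength (insert [] L) K := by
  rintro w (rfl | hw) hlen
  · simp at hlen
  · exact (h w hw hlen).mono (Set.subset_insert _ _) le_rfl

variable {L M : Language T}

theorem IsPumpable.append_right {p q : List T} (hp : IsPumpable L K p) (hq : q ∈ M) :
    IsPumpable (L * M) K (p ++ q) := by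
  obtain ⟨u, v, x, y, z, rfl, hlen, hvy, hL⟩ := hp
  refine ⟨u, v, x, y, z ++ q, by simp, hlen, hvy, fun i => ?_⟩
  change _ ∈ (L * M : Language T)
  simpa using Language.append_mem_mul (hL i) hq

theorem IsPumpable.append_left {p q : List T} (hq : IsPumpable M K q) (hp : p ∈ L) :
    IsPumpable (L * M) (p.length + K) (p ++ q) := by
  obtain ⟨u, v, x, y, z, rfl, hlen, hvy, hM⟩ := hq
  refine ⟨p ++ u, v, x, y, z, by simp, by simpa [add_assoc] using hlen, hvy, fun i => ?_⟩
  change _ ∈ (L * M : Language T)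
  simpa using Language.append_mem_mul hp (hM i)

theorem HasPumpingLength.one : HasPumpingLength (1 : Language T) 0 := by
  rintro w rfl hw
  simp at hw

theorem HasPumpingLength.mul (hL : HasPumpingLength L K) (hM : HasPumpingLength M K') :
    HasPumpingLength (L * M) (K + K') := by
  rintro _ ⟨p, hp, q, hq, rfl⟩ hlen
  simp only [List.length_append] at hlen
  by_cases hpK : K < p.length
  · exact ((hL p hp hpK).append_right hq).mono le_rfl (by omega)
  · exact ((hM q hq (by omega)).append_left hp).mono le_rfl (by omega)

theorem HasPumpingLength.prod_ofFn {k : ℕ} {L : Fin k → Language T}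
    (h : ∀ i, HasPumpingLength (L i) K) : HasPumpingLength (List.ofFn L).prod (k * K) := by
  induction k with
  | zero => simpa using HasPumpingLength.one
  | succ k ih =>
    simpa [add_mul, add_comm] using (h 0).mul (ih fun i => h i.succ)

theorem mem_prod_ofFn {k : ℕ} {L : Fin k → Language T} {w : List T} :
    w ∈ (List.ofFn L).prod ↔ ∃ ps : Fin k → List T, w = (List.ofFn ps).flatten ∧
      ∀ i, ps i ∈ L i := by
  induction k generalizing w with
  | zero => simp [Language.mem_one]
  | succ k ih =>
    simp only [List.ofFn_succ, List.prod_cons, Language.mem_mul, ih, List.flatten_cons,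
      Fin.exists_fin_succ_pi, Fin.forall_fin_succ, Fin.cons_zero, Fin.cons_succ]
    grind

end Pumping

/-! ### Pumping in linear and `k`-linear grammars -/

section LinearGrammars

variable {T N : Type} {rs : List (LinearRule T N)}

/-- `LinContext rs n A B u w`: the linear productions in `rs` derive the sentential form `u B w`
from the nonterminal `A` in exactly `n` steps. -/
inductive LinContext (rs : List (LinearRule T N)) : ℕ → N → N → List T → List T → Prop
  | refl (A : N) : LinContext rs 0 A A [] []
  | step {n : ℕ} {A B C : N} {u u' w w' : List T}
      (hr : (⟨A, Sum.inr (u, B, w)⟩ : LinearRule T N) ∈ rs) (h : LinContext rs n B C u' w') :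
      LinContext rs (n + 1) A C (u ++ u') (w' ++ w)

/-- The linear productions in `rs` derive the terminal word `p` from `A` in exactly `n + 1` steps,
the last of which is a terminal production. -/
def LinDerivesIn (rs : List (LinearRule T N)) (n : ℕ) (A : N) (p : List T) : Prop :=
  ∃ (B : N) (u t w : List T), LinContext rs n A B u w ∧
    (⟨B, Sum.inl t⟩ : LinearRule T N) ∈ rs ∧ p = u ++ t ++ w

/-- The number of terminals on the right-hand side of a production. -/
def LinearRule.size (r : LinearRule T N) : ℕ :=
  match r.output with
  | Sum.inl u => u.length
  | Sum.inr (u, _, w) => u.length + w.length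

namespace LinContext

variable {m n : ℕ} {A B C : N} {u u' w w' : List T}

theorem trans (h : LinContext rs m A B u w) (h' : LinContext rs n B C u' w') :
    LinContext rs (m + n) A C (u ++ u') (w' ++ w) := by
  induction h with
  | refl => simpa using h'
  | step hr _ ih => simpa [Nat.add_right_comm] using step hr (ih h')

theorem linDerives {p : List T} (h : LinContext rs n A B u w) (hp : LinDerives rs B p) :
    LinDerives rs A (u ++ p ++ w) := by
  induction h with
  | refl => simpa using hp
  | step hr _ ih => simpa using LinDerives.step hr (ih hp)

theorem iterate (h : LinContext rs n A A u w) (i : ℕ) :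
    LinContext rs (i * n) A A (wordPow u i) (wordPow w i) := by
  induction i with
  | zero =>
    rw [zero_mul]
    exact refl A
  | succ i ih =>
    rw [wordPow_succ' w, add_mul, one_mul, add_comm]
    exact h.trans ih

theorem length_le {c : ℕ} (hc : ∀ r ∈ rs, r.size ≤ c) (h : LinContext rs n A B u w) :
    u.length + w.length ≤ n * c := by
  induction h with
  | refl => simp
  | step hr _ ih =>
    have hsize := hc _ hr
    simp only [LinearRule.size] at hsize
    simp only [List.length_append, add_mul]
    omega

theorem mem_input (h : LinContext rs n A B u w) (hB : B ∈ rs.map LinearRule.input) :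
    A ∈ rs.map LinearRule.input := by
  cases h with
  | refl => exact hB
  | step hr _ => exact List.mem_map_of_mem hr

theorem exists_path (h : LinContext rs n A B u w) :
    ∃ path : ℕ → N, ∀ i j k, i + j + k = n → ∃ u₁ u₂ u₃ w₁ w₂ w₃,
      LinContext rs i A (path i) u₁ w₁ ∧ LinContext rs j (path i) (path (i + j)) u₂ w₂ ∧
      LinContext rs k (path (i + j)) B u₃ w₃ ∧ u = u₁ ++ u₂ ++ u₃ ∧ w = w₃ ++ w₂ ++ w₁ := by
  induction h with
  | refl A =>
    refine ⟨fun _ => A, fun i j k hn => ?_⟩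
    obtain ⟨⟨rfl, rfl⟩, rfl⟩ : (i = 0 ∧ j = 0) ∧ k = 0 := by omega
    exact ⟨[], [], [], [], [], [], refl A, refl A, refl A, rfl, rfl⟩
  | @step n A B C u u' w w' hr h ih =>
    obtain ⟨path, hpath⟩ := ih
    refine ⟨fun | 0 => A | i + 1 => path i, fun i j k hn => ?_⟩
    rcases i with _ | i
    · rcases j with _ | j
      · obtain rfl : k = n + 1 := by omega
        exact ⟨[], [], _, [], [], _, refl A, refl A, step hr h, by simp, by simp⟩
      · obtain ⟨u₁, u₂, u₃, w₁, w₂, w₃, h₁, h₂, h₃, rfl, rfl⟩ := hpath 0 j k (by omega)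
        rw [Nat.zero_add] at h₂ h₃
        refine ⟨[], u ++ (u₁ ++ u₂), u₃, [], w₂ ++ w₁ ++ w, w₃, refl A, ?_, ?_, by simp, by simp⟩
        · simpa using step hr (h₁.trans h₂)
        · simpa using h₃
    · obtain ⟨u₁, u₂, u₃, w₁, w₂, w₃, h₁, h₂, h₃, rfl, rfl⟩ := hpath i j k (by omega)
      refine ⟨u ++ u₁, u₂, u₃, w₁ ++ w, w₂, w₃, step hr h₁, ?_, ?_, by simp, by simp⟩
      · simpa [Nat.add_right_comm] using h₂
      · simpa [Nat.add_right_comm] using h₃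

theorem exists_loop {S : Finset N} (hS : ∀ C, C ∈ S ↔ C ∈ rs.map LinearRule.input)
    (h : LinContext rs n A B u w) (hB : B ∈ S) (hn : S.card ≤ n) :
    ∃ i j k D u₁ u₂ u₃ w₁ w₂ w₃, i + j + k = n ∧ 0 < j ∧ i + j ≤ S.card ∧
      LinContext rs i A D u₁ w₁ ∧ LinContext rs j D D u₂ w₂ ∧ LinContext rs k D B u₃ w₃ ∧
      u = u₁ ++ u₂ ++ u₃ ∧ w = w₃ ++ w₂ ++ w₁ := by
  obtain ⟨path, hpath⟩ := h.exists_path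
  have path_mem : ∀ i ∈ Finset.range (S.card + 1), path i ∈ S := by
    intro i hi
    have hin : i ≤ n := (Finset.mem_range_succ_iff.1 hi).trans hn
    obtain ⟨_, _, _, _, _, _, -, -, h₃, -, -⟩ := hpath i 0 (n - i) (by omega)
    exact (hS _).2 (h₃.mem_input ((hS _).1 hB))
  obtain ⟨i, d, hd, hcard, heq⟩ : ∃ i d, 0 < d ∧ i + d ≤ S.card ∧ path i = path (i + d) := by
    obtain ⟨i, hi, j, hj, hne, heq⟩ :=
      Finset.exists_ne_map_eq_of_card_lt_of_maps_to (by simp) path_mem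
    rw [Finset.mem_range_succ_iff] at hi hj
    rcases hne.lt_or_gt with hij | hji
    · exact ⟨i, j - i, by omega, by omega, by rwa [Nat.add_sub_cancel' hij.le]⟩
    · exact ⟨j, i - j, by omega, by omega, by rwa [Nat.add_sub_cancel' hji.le, eq_comm]⟩
  obtain ⟨u₁, u₂, u₃, w₁, w₂, w₃, h₁, h₂, h₃, hu, hw⟩ := hpath i d (n - (i + d)) (by omega)
  rw [← heq] at h₂ h₃
  exact ⟨i, d, _, path i, u₁, u₂, u₃, w₁, w₂, w₃, by omega, hd, hcard, h₁, h₂, h₃, hu, hw⟩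

end LinContext

theorem LinDerives.exists_linDerivesIn {A : N} {p : List T} (h : LinDerives rs A p) :
    ∃ n, LinDerivesIn rs n A p := by
  induction h with
  | terminal hr => exact ⟨0, _, [], _, [], .refl _, hr, by simp⟩
  | step hr _ ih =>
    obtain ⟨n, B, u, t, w, h, ht, rfl⟩ := ih
    exact ⟨n + 1, B, _, t, _, .step hr h, ht, by simp⟩

theorem LinDerivesIn.length_le {n c : ℕ} {A : N} {p : List T} (hc : ∀ r ∈ rs, r.size ≤ c)
    (h : LinDerivesIn rs n A p) : p.length ≤ (n + 1) * c := by
  obtain ⟨B, u, t, w, h, ht, rfl⟩ := h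
  have hctx := h.length_le hc
  have hterm : t.length ≤ c := hc _ ht
  simp only [List.length_append, add_mul]
  omega

theorem LinDerivesIn.isPumpable {n c : ℕ} {A : N} {p : List T} {S : Finset N}
    (hS : ∀ C, C ∈ S ↔ C ∈ rs.map LinearRule.input) (hc : ∀ r ∈ rs, r.size ≤ c)
    (h : LinDerivesIn rs n A p) (hmin : ∀ m < n, ¬ LinDerivesIn rs m A p) (hn : S.card ≤ n) :
    IsPumpable {q | LinDerives rs A q} (S.card * c) p := by
  obtain ⟨B, u, t, w, hctx, ht, rfl⟩ := h
  have hB : B ∈ S := (hS B).2 (List.mem_map_of_mem ht)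
  obtain ⟨i, j, k, D, u₁, u₂, u₃, w₁, w₂, w₃, hn, hj, hcard, h₁, h₂, h₃, rfl, rfl⟩ :=
    hctx.exists_loop hS hB hn
  refine ⟨u₁, u₂, u₃ ++ t ++ w₃, w₂, w₁, by simp, ?_, fun hnil => ?_, fun i => ?_⟩
  · have hlen := (h₁.trans h₂).length_le hc
    have hle := Nat.mul_le_mul_right c hcard
    simp only [List.length_append] at hlen
    omega
  · obtain ⟨rfl, rfl⟩ := List.append_eq_nil_iff.1 hnil
    exact hmin (i + k) (by omega) ⟨B, _, t, _, h₁.trans h₃, ht, by simp⟩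
  · change LinDerives rs A _
    simpa using (h₁.trans (h₂.iterate i)).linDerives (h₃.linDerives (.terminal ht))

theorem exists_hasPumpingLength_linDerives (rs : List (LinearRule T N)) :
    ∃ K, ∀ A, HasPumpingLength {p | LinDerives rs A p} K := by
  classical
  let S := (rs.map LinearRule.input).toFinset
  let c := (rs.map LinearRule.size).sum
  have hc : ∀ r ∈ rs, r.size ≤ c := fun r hr => List.le_sum_of_mem (List.mem_map_of_mem hr)
  refine ⟨S.card * c, fun A p hp hlen => ?_⟩
  have hex := LinDerives.exists_linDerivesIn hp
  refine (Nat.find_spec hex).isPumpable (fun C => List.mem_toFinset) hc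
    (fun m => Nat.find_min hex) ?_
  by_contra! hn
  exact hlen.not_ge (((Nat.find_spec hex).length_le hc).trans (Nat.mul_le_mul_right c hn))

theorem KLinearGrammar.exists_hasPumpingLength {k : ℕ} (G : KLinearGrammar T k) :
    ∃ K, HasPumpingLength G.language K := by
  obtain ⟨K, hK⟩ := exists_hasPumpingLength_linDerives G.rules
  let factor (i : Fin k) : Language T := {p | LinDerives G.rules (G.heads i) p}
  have hprod : G.language = (List.ofFn factor).prod := Set.ext fun _ => mem_prod_ofFn.symm
  exact ⟨k * K, hprod ▸ HasPumpingLength.prod_ofFn fun i => hK (G.heads i)⟩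

theorem IsKLinearLang.exists_hasPumpingLength {k : ℕ} {L : Set (List T)} (h : IsKLinearLang k L) :
    ∃ K, HasPumpingLength (insert [] L) K := by
  obtain ⟨G, hG⟩ := h
  obtain ⟨K, hK⟩ := G.exists_hasPumpingLength
  have hL : insert [] L = insert [] G.language := by
    ext p
    by_cases hp : p = [] <;> simp [hp, hG]
  exact ⟨K, hL ▸ hK.insert_nil⟩

end LinearGrammars

/-! ### Pumping in words of the form `aⁿ bⁿ aᵐ bᵐ ⋯` -/

/-- The word `aⁿ bⁿ aᵐ bᵐ ⋯` for the list of exponents `[n, m, …]`, with `a = 0` and `b = 1`. -/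
def blockWord (ns : List ℕ) : List (Fin 2) :=
  ns.flatMap fun n => List.replicate n 0 ++ List.replicate n 1

/-- The words `aⁿ bⁿ aᵐ bᵐ ⋯` with at most `d` exponents, all positive. -/
def blockWords (d : ℕ) : Set (List (Fin 2)) :=
  {p | ∃ ns : List ℕ, (∀ n ∈ ns, 0 < n) ∧ ns.length ≤ d ∧ p = blockWord ns}

section BlockWords

variable {d l : ℕ} {ns ms : List ℕ}

theorem blockWord_cons (n : ℕ) (ns : List ℕ) :
    blockWord (n :: ns) = List.replicate n 0 ++ (List.replicate n 1 ++ blockWord ns) := by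
  simp [blockWord]

theorem count_blockWord (ns : List ℕ) : (blockWord ns).count 0 = (blockWord ns).count 1 := by
  induction ns with
  | nil => rfl
  | cons n ns ih => simp [blockWord_cons, List.count_replicate, ih]

theorem length_le_of_sublist_blockWord {s : List (Fin 2)} (hs : s.IsChain (· ≠ ·))
    (h : s.Sublist (blockWord ns)) : s.length ≤ 2 * ns.length := by
  induction ns generalizing s with
  | nil => simp [List.sublist_nil.1 h]
  | cons n ns ih =>
    rw [blockWord_cons] at h
    obtain ⟨s₁, hs₁, h₁, hlen₁⟩ := exists_sublist_of_isChain_ne hs h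
    obtain ⟨s₂, hs₂, h₂, hlen₂⟩ := exists_sublist_of_isChain_ne hs₁ h₁
    have hlen : s₂.length ≤ 2 * ns.length := ih hs₂ h₂
    rw [List.length_cons]
    omega

theorem head?_blockWord_ne_one (hns : ∀ n ∈ ns, 0 < n) : (blockWord ns).head? ≠ some 1 := by
  cases ns with
  | nil => simp [blockWord]
  | cons n ns =>
    obtain ⟨n, rfl⟩ := Nat.exists_eq_succ_of_ne_zero (hns n List.mem_cons_self).ne'
    simp [blockWord_cons, List.replicate_succ]

theorem eq_of_blockWord_cons_eq {n p q : ℕ} {t : List (Fin 2)} (hns : ∀ m ∈ n :: ns, 0 < m)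
    (hq : 0 < q) (ht : t.head? ≠ some 1)
    (h : blockWord (n :: ns) = List.replicate p 0 ++ (List.replicate q 1 ++ t)) :
    n = p ∧ n = q ∧ blockWord ns = t := by
  rw [List.forall_mem_cons] at hns
  rw [blockWord_cons] at h
  obtain ⟨hp, h⟩ := replicate_append_inj (head?_replicate_append_ne one_ne_zero hns.1 _)
    (head?_replicate_append_ne one_ne_zero hq _) h
  exact ⟨hp, replicate_append_inj (head?_blockWord_ne_one hns.2) ht h⟩

theorem blockWord_inj (hns : ∀ n ∈ ns, 0 < n) (hms : ∀ m ∈ ms, 0 < m)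
    (h : blockWord ns = blockWord ms) : ns = ms := by
  induction ns generalizing ms with
  | nil =>
    cases ms with
    | nil => rfl
    | cons m ms => simp [blockWord, (hms m List.mem_cons_self).ne'] at h
  | cons n ns ih =>
    cases ms with
    | nil => simp [blockWord, (hns n List.mem_cons_self).ne'] at h
    | cons m ms =>
      obtain ⟨hm, hms'⟩ := List.forall_mem_cons.1 hms
      obtain ⟨rfl, -, htail⟩ := eq_of_blockWord_cons_eq hns hm (head?_blockWord_ne_one hms')
        (h.trans (blockWord_cons m ms))
      rw [ih (List.forall_mem_cons.1 hns).2 hms' htail]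

theorem eq_of_mem_blockWords {p q : ℕ} {t : List (Fin 2)} (hq : 0 < q) (ht : t.head? ≠ some 1)
    (h : List.replicate p 0 ++ (List.replicate q 1 ++ t) ∈ blockWords d) : p = q := by
  obtain ⟨_ | ⟨n, ns⟩, hns, -, h⟩ := h
  · simp [blockWord, hq.ne'] at h
  · obtain ⟨rfl, hnq, -⟩ := eq_of_blockWord_cons_eq hns hq ht h.symm
    exact hnq

theorem isChain_wordPow_zero_one (n : ℕ) : (wordPow [(0 : Fin 2), 1] n).IsChain (· ≠ ·) := by
  have hcons : (1 :: wordPow [(0 : Fin 2), 1] n).IsChain (· ≠ ·) := by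
    induction n with
    | zero => simp [wordPow]
    | succ n ih => simpa [wordPow] using ih
  exact hcons.tail

variable {u v x y z : List (Fin 2)}

theorem count_add_count_eq_of_pump
    (h : ∀ i, u ++ wordPow v i ++ x ++ wordPow y i ++ z ∈ blockWords d) :
    v.count 0 + y.count 0 = v.count 1 + y.count 1 := by
  obtain ⟨ns₀, -, -, h₀⟩ := h 0
  obtain ⟨ns₁, -, -, h₁⟩ := h 1
  have hcount₀ := count_blockWord ns₀
  have hcount₁ := count_blockWord ns₁
  rw [← h₀] at hcount₀
  rw [← h₁] at hcount₁
  simp only [wordPow, List.append_nil, List.count_append] at hcount₀ hcount₁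
  omega

theorem zero_notMem_of_pump
    (h : ∀ i, u ++ wordPow v i ++ x ++ wordPow y i ++ z ∈ blockWords d) (h1 : 1 ∈ y) :
    0 ∉ y := by
  -- A word with at most `2 d` runs would contain `y ^ (2 d + 2)` and with it the alternating word
  -- `(a b) ^ (d + 1)` as a subsequence.
  intro h0
  let s := wordPow [(0 : Fin 2), 1] (d + 1)
  obtain ⟨ns, -, hd, hns⟩ := h s.length
  have hsub : s ⊆ y := fun a _ => by fin_cases a <;> assumption
  have hy : (wordPow y s.length).Sublist (blockWord ns) := by
    rw [← hns]
    exact (List.sublist_append_right _ _).trans (List.sublist_append_left _ _)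
  have hlen : s.length ≤ 2 * ns.length := length_le_of_sublist_blockWord
    (isChain_wordPow_zero_one (d + 1)) ((sublist_wordPow_length hsub).trans hy)
  have hs : s.length = (d + 1) * 2 := by simp [s, wordPow_eq_flatten_replicate]
  omega

theorem eq_replicate_one_of_pump {j : ℕ}
    (h : ∀ i, u ++ wordPow (List.replicate j 0) i ++ x ++ wordPow y i ++ z ∈ blockWords d)
    (hne : List.replicate j 0 ++ y ≠ []) : 0 < j ∧ y = List.replicate j 1 := by
  have hcount : j + y.count 0 = y.count 1 := by
    simpa [List.count_replicate] using count_add_count_eq_of_pump h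
  have hy : 0 ∉ y := fun h0 => zero_notMem_of_pump h
    (List.count_pos_iff.1 (by have := List.count_pos_iff.2 h0; omega)) h0
  have hrep : y = List.replicate y.length 1 :=
    List.eq_replicate_of_mem fun b hb => by
      fin_cases b
      · exact absurd hb hy
      · rfl
  obtain rfl : j = y.length := by
    rw [List.count_eq_zero.2 hy, hrep] at hcount
    simpa using hcount
  refine ⟨Nat.pos_of_ne_zero fun hj => hne ?_, hrep⟩
  simp [List.length_eq_zero_iff.1 hj]

theorem exists_blockWord_mem_of_isPumpable {L : Set (List (Fin 2))} (hL : L ⊆ blockWords d)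
    (hms : ∀ m ∈ ms, 0 < m) (h : IsPumpable L l (blockWord (l :: ms))) :
    ∃ j, 0 < j ∧ ∀ i, blockWord ((l + i * j) :: ms) ∈ L := by
  obtain ⟨u, v, x, y, z, hw, hlen, hvy, hpump⟩ := h
  simp only [blockWord_cons, List.append_assoc] at hw
  obtain ⟨c, j, r, hl, rfl, rfl, hxyz⟩ := exists_eq_replicate_of_length_add_length_le hw hlen
  obtain ⟨hj, rfl⟩ := eq_replicate_one_of_pump (fun i => hL (hpump i)) hvy
  obtain ⟨x, rfl, hxz⟩ := exists_eq_replicate_append_of_head?_ne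
    (head?_replicate_append_ne one_ne_zero hj z) hxyz
  simp only [wordPow_replicate] at hpump
  obtain ⟨s, e, hse, rfl, rfl⟩ | ⟨b, t, hb, rfl⟩ :=
    replicate_append_eq_append_replicate_append (head?_blockWord_ne_one hms) hxz
  · refine ⟨j, hj, fun i => ?_⟩
    have ha : l + i * j = c + (i + 1) * j + r := by lia
    have hb : l + i * j = s + (i + 1) * j + e := by lia
    rw [blockWord_cons]
    nth_rw 1 [ha]
    rw [hb]
    simpa only [List.replicate_add, List.append_assoc] using hpump (i + 1)
  · -- Pumping lengthens the first block of `a`s but not the first block of `b`s.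
    have hpump₂ : List.replicate (l + j) 0 ++ (List.replicate l 1 ++
        (b :: t ++ (List.replicate (2 * j) 1 ++ z))) ∈ L := by
      have ha : l + j = c + 2 * j + r := by omega
      simpa only [ha, List.replicate_add, List.append_assoc] using hpump 2
    have hfirst : l + j = l := eq_of_mem_blockWords (by omega) (by simpa using hb) (hL hpump₂)
    omega

end BlockWords

/-! ### Sets without arithmetic progressions -/

theorem threeAPFree_pow {b : ℕ} (hb : 1 < b) : ThreeAPFree {n | ∃ k : ℕ, n = b ^ k} := by
  rintro _ ⟨x, rfl⟩ _ ⟨y, rfl⟩ _ ⟨z, rfl⟩ h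
  have le_of_sum {s t : ℕ} (hst : b ^ s + b ^ t = b ^ y + b ^ y) : b ^ s ≤ b ^ y := by
    refine Nat.pow_le_pow_right (by omega) (not_lt.1 fun hys => ?_)
    have hpow : b ^ y * 2 ≤ b ^ s := calc
      b ^ y * 2 ≤ b ^ y * b := Nat.mul_le_mul_left _ hb
      _ = b ^ (y + 1) := (pow_succ b y).symm
      _ ≤ b ^ s := Nat.pow_le_pow_right (by omega) hys
    have hpos : 0 < b ^ t := by positivity
    omega
  have hx := le_of_sum h
  have hz := le_of_sum ((add_comm _ _).trans h)
  omega

theorem exists_add_mul_notMem_of_threeAPFree {s : Set ℕ} (hs : ThreeAPFree s) (a : ℕ) {d : ℕ}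
    (hd : 0 < d) : ∃ i, a + i * d ∉ s := by
  by_contra! h
  have hstep := hs (h 0) (h 1) (h 2) (by ring)
  omega

/-! ### The language `L₂` -/

section LanguageL2

variable {H : Set ℕ}

theorem mem_L2_iff {p : List (Fin 2)} :
    p ∈ L2 H ↔ ∃ ns : List ℕ, (∀ n ∈ ns, 0 < n) ∧
      (ns.length = 3 ∧ (∃ n ∈ ns, n ∈ H) ∨ ns.length = 2) ∧ p = blockWord ns := by
  constructor
  · rintro (⟨l, m, n, hl, hm, hn, hH, rfl⟩ | ⟨i, j, hi, hj, rfl⟩)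
    · exact ⟨[l, m, n], by simpa using ⟨hl, hm, hn⟩, by simpa using hH, by simp [blockWord]⟩
    · exact ⟨[i, j], by simpa using ⟨hi, hj⟩, by simp, by simp [blockWord]⟩
  · rintro ⟨ns, hpos, ⟨hlen, hH⟩ | hlen, rfl⟩
    · obtain ⟨l, m, n, rfl⟩ := List.length_eq_three.1 hlen
      simp only [List.forall_mem_cons] at hpos
      exact .inl ⟨l, m, n, hpos.1, hpos.2.1, hpos.2.2.1, by simpa using hH, by simp [blockWord]⟩
    · obtain ⟨i, j, rfl⟩ := List.length_eq_two.1 hlen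
      simp only [List.forall_mem_cons] at hpos
      exact .inr ⟨i, j, hpos.1, hpos.2.1, by simp [blockWord]⟩

theorem insert_nil_L2_subset_blockWords : insert [] (L2 H) ⊆ blockWords 3 := by
  refine Set.insert_subset ⟨[], by simp [blockWord]⟩ fun p hp => ?_
  obtain ⟨ns, hpos, hlen, rfl⟩ := mem_L2_iff.1 hp
  exact ⟨ns, hpos, by omega, rfl⟩

theorem blockWord_mem_L2_iff {l m n : ℕ} (hpos : ∀ k ∈ [l, m, n], 0 < k) :
    blockWord [l, m, n] ∈ L2 H ↔ l ∈ H ∨ m ∈ H ∨ n ∈ H := by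
  refine mem_L2_iff.trans ⟨?_, fun hH => ⟨[l, m, n], hpos, by simpa using hH, rfl⟩⟩
  rintro ⟨ns, hns, hmem, heq⟩
  obtain rfl := blockWord_inj hpos hns heq
  simpa using hmem

theorem L2_not_3linear_general (hinf : H.Infinite)
    (hprog : ∀ a d, 0 < d → ∃ i, a + i * d ∉ H) (k : ℕ) : ¬ IsKLinearLang k (L2 H) := by
  intro hlin
  obtain ⟨K, hK⟩ := hlin.exists_hasPumpingLength
  obtain ⟨m, hm, hmH⟩ : ∃ m, 0 < m ∧ m ∉ H := by
    obtain ⟨i, hi⟩ := hprog 1 1 one_pos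
    exact ⟨1 + i * 1, by omega, hi⟩
  obtain ⟨l, hlH, hl⟩ := hinf.exists_gt K
  have hpos : ∀ {n}, 0 < n → ∀ e ∈ [n, m, m], 0 < e := by simp [hm]
  have hpump : IsPumpable (insert [] (L2 H)) l (blockWord [l, m, m]) := by
    refine (hK _ (.inr ?_) ?_).mono subset_rfl hl.le
    · exact (blockWord_mem_L2_iff (hpos (by omega))).2 (.inl hlH)
    · simp only [blockWord_cons, List.length_append, List.length_replicate]
      omega
  obtain ⟨j, hj, hmem⟩ := exists_blockWord_mem_of_isPumpable insert_nil_L2_subset_blockWords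
    (by simp [hm]) hpump
  obtain ⟨i, hi⟩ := hprog l j hj
  have hL2 : blockWord [l + i * j, m, m] ∈ L2 H :=
    Set.mem_of_mem_insert_of_ne (hmem i) (by simp [blockWord, hm.ne'])
  simpa [hi, hmH] using (blockWord_mem_L2_iff (hpos (by omega))).1 hL2

end LanguageL2

/-- If `H` is an infinite set of powers of two, then `L₂` is not `3`-linear
(Example 14). -/
theorem L2_not_3linear (H : Set ℕ) (hinf : H.Infinite)
    (hpow : H ⊆ {n | ∃ k : ℕ, n = 2 ^ k}) :
    ¬ IsKLinearLang 3 (L2 H) := by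
  have hfree : ThreeAPFree H := (threeAPFree_pow one_lt_two).mono hpow
  exact L2_not_3linear_general hinf (fun a _ => exists_add_mul_notMem_of_threeAPFree hfree a) 3
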